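/- For every n ≥ 0, the number of nonzero entries on row n of Pascal's triangle modulo 4 satisfies, as an identity in the rational numbers, a_4(n) = 2^{|n|_1} · (1 + (1/2)|n|_{10}), where subword counts are taken in the base-2 representation of n. -/

import Mathlib

/-- The number of integers `0 ≤ m ≤ n` such that `C(n,m)` is not divisible by `k`,
i.e. the number of nonzero entries on row `n` of Pascal's triangle modulo `k`. -/
def rowCount (k n : ℕ) : ℕ :=
  ((Finset.range (n + 1)).filter fun m => ¬ k ∣ n.choose m).card

/-- The number of borrows when subtracting `m` from `n` in base `b` (for `m ≤ n`):
the number of indices `i ≥ 0` with `m mod b^(i+1) > n mod b^(i+1)`. -/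
def borrowCount (b n m : ℕ) : ℕ :=
  ((Finset.range (Nat.digits b n).length).filter fun i => n % b ^ (i + 1) < m % b ^ (i + 1)).card

/-- `A_n(β)`: the number of `0 ≤ m ≤ n` with exactly `β` borrows
when subtracting `m` from `n` in base `b`. -/
def borrowA (b n β : ℕ) : ℕ :=
  ((Finset.range (n + 1)).filter fun m => borrowCount b n m = β).card

/-- `B_n(β)` with respect to `L` digit positions: the number of `n < m ≤ b^L - 1` such that
exactly `β` of the indices `0 ≤ i ≤ L - 1` satisfy `m mod b^(i+1) > n mod b^(i+1)`. -/
def borrowB (b L n β : ℕ) : ℕ :=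
  ((Finset.Ioc n (b ^ L - 1)).filter fun m =>
    ((Finset.range L).filter fun i => n % b ^ (i + 1) < m % b ^ (i + 1)).card = β).card

/-- The base-`b` digit string of `n`, most significant digit first (empty for `n = 0`). -/
def wordOf (b n : ℕ) : List ℕ := (Nat.digits b n).reverse

/-- `|n|_w`: the number of occurrences of `w` as a contiguous subword of the
base-`b` digit string of `n`. -/
def subwordCount (b n : ℕ) (w : List ℕ) : ℕ :=
  ((Finset.range ((wordOf b n).length + 1 - w.length)).filter fun s =>
    ((wordOf b n).drop s).take w.length = w).card

/-- `c(w_k ⋯ w_0)` for a word `w = [w_k, …, w_0]` (most significant letter first):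
`(w_k/(w_k+1)) · (∏_{h=1}^{k−1} (b−w_{k−h})/(w_{k−h}+1)) · (b−w_0−1)/(w_0+1)`. -/
def cword (b : ℕ) (w : List ℕ) : ℚ :=
  ((w.getD 0 0 : ℚ) / ((w.getD 0 0 : ℚ) + 1)) *
    (∏ h ∈ Finset.Ico 1 (w.length - 1),
      ((b : ℚ) - (w.getD h 0 : ℚ)) / ((w.getD h 0 : ℚ) + 1)) *
    (((b : ℚ) - (w.getD (w.length - 1) 0 : ℚ) - 1) / ((w.getD (w.length - 1) 0 : ℚ) + 1))

/-- The sum `Σ c(v)c(w)⋯c(z)` over all sets of pairwise nonoverlapping contiguous subwords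
of `W` (identified by their position intervals: a pair `(s, len)` denotes the subword
occupying positions `s, …, s+len-1`) whose multiset of lengths equals `P`. -/
def nonoverlapSum (b : ℕ) (W : List ℕ) (P : Multiset ℕ) : ℚ :=
  ∑ S ∈ ((Finset.range W.length ×ˢ Finset.Icc 1 W.length).powerset.filter fun S =>
      Multiset.map Prod.snd S.val = P ∧
      (∀ q ∈ S, q.1 + q.2 ≤ W.length) ∧
      (∀ q ∈ S, ∀ r ∈ S, q ≠ r → q.1 + q.2 ≤ r.1 ∨ r.1 + r.2 ≤ q.1)),
    ∏ q ∈ S, cword b ((W.drop q.1).take q.2)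

/-!
Write a row as `p * n + a` and an entry as `p * m + c` with `a, c < p`. Legendre's formula
`v_p((p * n + a)!) = n + v_p(n!)` shows that the valuation of the binomial coefficient is that of
`C(n, m)` if `c ≤ a`, and one more than that of `n * C(n - 1, m)` if `c > a`, when subtracting the
last digits borrows. Counting the entries of the row by `c` gives
`a_p(p n + a) = (a + 1) a_p(n)` and
`a_{p²}(p n + a) = (a + 1) a_{p²}(n) + (p - 1 - a) e a_p(n / p)`, where `e = n mod p`.
As `a_p(n) = (e + 1) a_p(n / p)`, the quotient `a_{p²} / a_p` grows by
`e / (e + 1) * (p - 1 - a) / (a + 1)`, the weight of the two-letter word `e a`, when the digit `a`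
is appended to `n`.
-/

open Finset
open scoped Nat

theorem digit_induction {b : ℕ} (hb : 1 < b) {motive : ℕ → Prop} (zero : motive 0)
    (mul_add : ∀ n a, a < b → motive n → motive (b * n + a)) (n : ℕ) : motive n := by
  induction n using Nat.strong_induction_on with
  | _ n ih =>
    rcases n.eq_zero_or_pos with rfl | hn
    · exact zero
    · rw [← Nat.div_add_mod n b]
      exact mul_add _ _ (Nat.mod_lt n (by lia)) (ih _ (Nat.div_lt_self hn hb))

section Subwords

theorem card_occurrences_append_singleton {α : Type*} [DecidableEq α] (W w : List α) (a : α) :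
    #{s ∈ range ((W ++ [a]).length + 1 - w.length) | ((W ++ [a]).drop s).take w.length = w} =
      #{s ∈ range (W.length + 1 - w.length) | (W.drop s).take w.length = w} +
        if w <:+ W ++ [a] then 1 else 0 := by
  rcases Nat.lt_or_ge (W.length + 1) w.length with hlong | hshort
  · have not_suffix : ¬ w <:+ W ++ [a] := fun hw => by simpa [hlong.not_ge] using hw.length_le
    simp [not_suffix, Nat.sub_eq_zero_of_le hlong, Nat.sub_eq_zero_of_le hlong.le]
  · have positions : (W ++ [a]).length + 1 - w.length = (W.length + 1 - w.length) + 1 := by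
      rw [List.length_append, List.length_singleton]
      lia
    have last_position : ((W ++ [a]).drop (W.length + 1 - w.length)).take w.length = w ↔
        w <:+ W ++ [a] := by
      rw [List.suffix_iff_eq_drop, eq_comm, List.take_of_length_le (by simp; lia)]
      simp
    have earlier_position : ∀ s ∈ range (W.length + 1 - w.length),
        (((W ++ [a]).drop s).take w.length = w ↔ (W.drop s).take w.length = w) := by
      intro s hs
      rw [mem_range] at hs
      rw [List.drop_append_of_le_length (by lia), List.take_append_of_le_length (by simp; lia)]
    rw [positions, range_add_one, filter_insert, filter_congr earlier_position]
    simp only [last_position]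
    split_ifs <;> simp

variable {b n a c : ℕ}

theorem wordOf_mul_add (hb : 1 < b) (ha : a < b) (h : b * n + a ≠ 0) :
    wordOf b (b * n + a) = wordOf b n ++ [a] := by
  have digit_ne_zero : a ≠ 0 ∨ n ≠ 0 := by
    by_contra! hzero
    simp [hzero] at h
  rw [wordOf, add_comm, Nat.digits_add b hb a n ha digit_ne_zero, List.reverse_cons, wordOf]

theorem singleton_suffix_wordOf_iff (hb : 1 < b) (hc : c ≠ 0) :
    [c] <:+ wordOf b n ↔ n % b = c := by
  rcases n.eq_zero_or_pos with rfl | hn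
  · simp [wordOf, hc.symm]
  · rw [wordOf, Nat.digits_def' hb hn, ← List.reverse_singleton, List.reverse_suffix]
    simp [eq_comm]

theorem subwordCount_zero (b : ℕ) {w : List ℕ} (hw : w ≠ []) : subwordCount b 0 w = 0 := by
  simp [subwordCount, wordOf, Nat.sub_eq_zero_of_le (List.length_pos_iff.2 hw)]

theorem subwordCount_mul_add (hb : 1 < b) (ha : a < b) {w : List ℕ} (hw : w ≠ []) :
    subwordCount b (b * n + a) w =
      subwordCount b n w + if w <:+ wordOf b (b * n + a) then 1 else 0 := by
  rcases eq_or_ne (b * n + a) 0 with h | h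
  · obtain ⟨hn, rfl⟩ : n = 0 ∧ a = 0 := by simpa [(by lia : b ≠ 0)] using h
    simp [hn, wordOf, hw]
  · rw [subwordCount, wordOf_mul_add hb ha h]
    exact card_occurrences_append_singleton _ _ _

theorem subwordCount_singleton_mul_add (hb : 1 < b) (ha : a < b) (hc : c ≠ 0) :
    subwordCount b (b * n + a) [c] = subwordCount b n [c] + if a = c then 1 else 0 := by
  simp only [subwordCount_mul_add hb ha (List.cons_ne_nil _ _), singleton_suffix_wordOf_iff hb hc,
    Nat.mul_add_mod, Nat.mod_eq_of_lt ha]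

theorem pair_suffix_wordOf_mul_add_iff (hb : 1 < b) (ha : a < b) (hc : c ≠ 0) {d : ℕ} :
    [c, d] <:+ wordOf b (b * n + a) ↔ n % b = c ∧ a = d := by
  rcases eq_or_ne (b * n + a) 0 with h | h
  · obtain ⟨hn, rfl⟩ : n = 0 ∧ a = 0 := by simpa [(by lia : b ≠ 0)] using h
    simp [hn, wordOf, hc.symm]
  · rw [wordOf_mul_add hb ha h, ← singleton_suffix_wordOf_iff hb hc, ← List.reverse_prefix,
      ← List.reverse_prefix]
    simp [and_comm, eq_comm]

theorem subwordCount_pair_mul_add (hb : 1 < b) (ha : a < b) (hc : c ≠ 0) (d : ℕ) :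
    subwordCount b (b * n + a) [c, d] =
      subwordCount b n [c, d] + if n % b = c ∧ a = d then 1 else 0 := by
  simp only [subwordCount_mul_add hb ha (List.cons_ne_nil _ _),
    pair_suffix_wordOf_mul_add_iff hb ha hc]

end Subwords

section ChooseValuation

variable {p : ℕ} [Fact p.Prime] {n m a c : ℕ}

theorem padicValNat_factorial_mul_add_eq (n : ℕ) (ha : a < p) :
    padicValNat p (p * n + a)! = n + padicValNat p n ! := by
  rw [padicValNat_factorial_mul_add n ha, padicValNat_factorial_mul, add_comm]

theorem padicValNat_choose_add_padicValNat_factorial (i j : ℕ) :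
    padicValNat p ((i + j).choose i) + (padicValNat p i ! + padicValNat p j !) =
      padicValNat p (i + j)! := by
  have choose_ne_zero : (i + j).choose i ≠ 0 := (Nat.choose_pos (i.le_add_right j)).ne'
  rw [← Nat.add_choose_mul_factorial_mul_factorial, ← Nat.choose_symm_add, mul_assoc,
    padicValNat.mul choose_ne_zero (by positivity), padicValNat.mul (by positivity) (by positivity)]

theorem padicValNat_choose_mul_add_of_le (hmn : m ≤ n) (hca : c ≤ a) (ha : a < p) :
    padicValNat p ((p * n + a).choose (p * m + c)) = padicValNat p (n.choose m) := by
  obtain ⟨j, rfl⟩ := Nat.exists_eq_add_of_le hmn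
  obtain ⟨d, rfl⟩ := Nat.exists_eq_add_of_le hca
  have big := padicValNat_choose_add_padicValNat_factorial (p := p) (p * m + c) (p * j + d)
  have small := padicValNat_choose_add_padicValNat_factorial (p := p) m j
  rw [show p * m + c + (p * j + d) = p * (m + j) + (c + d) by ring,
    padicValNat_factorial_mul_add_eq (m + j) ha, padicValNat_factorial_mul_add_eq m (by lia),
    padicValNat_factorial_mul_add_eq j (by lia)] at big
  lia

theorem padicValNat_choose_mul_add_of_lt (hmn : m < n) (hac : a < c) (hc : c < p) :
    padicValNat p ((p * n + a).choose (p * m + c)) =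
      padicValNat p (n * (n - 1).choose m) + 1 := by
  obtain ⟨j, rfl⟩ := Nat.exists_eq_add_of_lt hmn
  obtain ⟨d, hd⟩ : ∃ d, p + a = c + d := ⟨p + a - c, by lia⟩
  have big := padicValNat_choose_add_padicValNat_factorial (p := p) (p * m + c) (p * j + d)
  have small := padicValNat_choose_add_padicValNat_factorial (p := p) m j
  have row_eq : p * m + c + (p * j + d) = p * (m + j + 1) + a := by linear_combination -hd
  rw [row_eq, padicValNat_factorial_mul_add_eq m hc, padicValNat_factorial_mul_add_eq j (by lia),
    padicValNat_factorial_mul_add_eq (m + j + 1) (by lia),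
    Nat.factorial_succ, padicValNat.mul (by positivity) (by positivity)] at big
  rw [Nat.add_sub_cancel, padicValNat.mul (by positivity)
    (Nat.choose_pos (m.le_add_right j)).ne']
  lia

theorem pow_dvd_choose_mul_add_iff_of_le (α : ℕ) (hca : c ≤ a) (ha : a < p) :
    p ^ α ∣ (p * n + a).choose (p * m + c) ↔ p ^ α ∣ n.choose m := by
  rcases le_or_gt m n with hmn | hnm
  · have entry_le : p * m + c ≤ p * n + a := by gcongr
    rw [padicValNat_dvd_iff_le (Nat.choose_pos entry_le).ne',
      padicValNat_dvd_iff_le (Nat.choose_pos hmn).ne', padicValNat_choose_mul_add_of_le hmn hca ha]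
  · have row_lt : p * n + a < p * m + c := by nlinarith
    simp [Nat.choose_eq_zero_of_lt hnm, Nat.choose_eq_zero_of_lt row_lt]

theorem pow_succ_dvd_choose_mul_add_iff_of_lt (α : ℕ) (hac : a < c) (hc : c < p) :
    p ^ (α + 1) ∣ (p * n + a).choose (p * m + c) ↔ p ^ α ∣ n * (n - 1).choose m := by
  rcases lt_or_ge m n with hmn | hnm
  · have entry_le : p * m + c ≤ p * n + a := by nlinarith
    have rhs_ne_zero : n * (n - 1).choose m ≠ 0 :=
      mul_ne_zero (by lia) (Nat.choose_pos (by lia)).ne'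
    rw [padicValNat_dvd_iff_le (Nat.choose_pos entry_le).ne', padicValNat_dvd_iff_le rhs_ne_zero,
      padicValNat_choose_mul_add_of_lt hmn hac hc, Nat.add_le_add_iff_right]
  · have row_lt : p * n + a < p * m + c := by nlinarith
    have rhs_eq_zero : n * (n - 1).choose m = 0 := by
      rcases n.eq_zero_or_pos with rfl | hn
      · exact zero_mul _
      · rw [Nat.choose_eq_zero_of_lt (by lia), mul_zero]
    simp [Nat.choose_eq_zero_of_lt row_lt, rhs_eq_zero]

end ChooseValuation

section RowCount

theorem sum_range_mul {M : Type*} [AddCommMonoid M] (f : ℕ → M) (b n : ℕ) :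
    ∑ m ∈ range (b * n), f m = ∑ c ∈ range b, ∑ m ∈ range n, f (b * m + c) := by
  induction n with
  | zero => simp
  | succ n ih =>
    simp only [Nat.mul_succ, sum_range_add, ih, sum_range_succ, sum_add_distrib]

theorem rowCount_eq_card_range {k n N : ℕ} (hN : n < N) :
    rowCount k n = #{m ∈ range N | ¬ k ∣ n.choose m} := by
  rw [rowCount]
  congr 1
  ext m
  simp only [mem_filter, mem_range, and_congr_left_iff]
  intro hm
  have : m ≤ n := by
    by_contra! h
    simp [Nat.choose_eq_zero_of_lt h] at hm
  lia

theorem rowCount_zero {k : ℕ} (hk : k ≠ 1) : rowCount k 0 = 1 := by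
  simp [rowCount, filter_singleton, hk]

variable {p : ℕ} [Fact p.Prime] {a : ℕ}

theorem rowCount_prime_pow_succ_mul_add (α n : ℕ) (ha : a < p) :
    rowCount (p ^ (α + 1)) (p * n + a) =
      (a + 1) * rowCount (p ^ (α + 1)) n +
        (p - (a + 1)) * #{m ∈ range (n + 1) | ¬ p ^ α ∣ n * (n - 1).choose m} := by
  have no_borrow : ∀ c ∈ range (a + 1),
      #{m ∈ range (n + 1) | ¬ p ^ (α + 1) ∣ (p * n + a).choose (p * m + c)} =
        rowCount (p ^ (α + 1)) n := by
    intro c hc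
    simp only [pow_dvd_choose_mul_add_iff_of_le _ (mem_range_succ_iff.1 hc) ha, rowCount]
  have borrow : ∀ c ∈ Ico (a + 1) p,
      #{m ∈ range (n + 1) | ¬ p ^ (α + 1) ∣ (p * n + a).choose (p * m + c)} =
        #{m ∈ range (n + 1) | ¬ p ^ α ∣ n * (n - 1).choose m} := by
    intro c hc
    rw [mem_Ico] at hc
    simp only [pow_succ_dvd_choose_mul_add_iff_of_lt _ hc.1 hc.2]
  have row_lt : p * n + a < p * (n + 1) := by lia
  rw [rowCount_eq_card_range row_lt, card_filter, sum_range_mul]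
  simp only [← card_filter]
  rw [← sum_range_add_sum_Ico _ (Nat.succ_le_of_lt ha), sum_congr rfl no_borrow,
    sum_congr rfl borrow]
  simp

theorem rowCount_prime_mul_add (n : ℕ) (ha : a < p) :
    rowCount p (p * n + a) = (a + 1) * rowCount p n := by
  simpa using rowCount_prime_pow_succ_mul_add 0 n ha

theorem card_not_dvd_mul_choose_pred (n : ℕ) :
    #{m ∈ range (n + 1) | ¬ p ∣ n * (n - 1).choose m} = n % p * rowCount p (n / p) := by
  have prime_p : p.Prime := Fact.out
  by_cases hdvd : p ∣ n
  · simp [hdvd.mul_right, Nat.mod_eq_zero_of_dvd hdvd]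
  · have mod_ne_zero : n % p ≠ 0 := fun h => hdvd (Nat.dvd_of_mod_eq_zero h)
    have mod_lt : n % p < p := n.mod_lt prime_p.pos
    have pred_eq : n - 1 = p * (n / p) + (n % p - 1) := by
      have := Nat.div_add_mod n p
      lia
    have n_pos : 0 < n := Nat.pos_of_ne_zero (by rintro rfl; simp at hdvd)
    simp only [prime_p.dvd_mul, hdvd, false_or]
    rw [← rowCount_eq_card_range (by lia), pred_eq, rowCount_prime_mul_add _ (by lia),
      Nat.sub_add_cancel (Nat.pos_of_ne_zero mod_ne_zero)]

theorem rowCount_prime_sq_mul_add (n : ℕ) (ha : a < p) :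
    rowCount (p ^ 2) (p * n + a) =
      (a + 1) * rowCount (p ^ 2) n + (p - (a + 1)) * (n % p * rowCount p (n / p)) := by
  simpa only [pow_one, card_not_dvd_mul_choose_pred] using rowCount_prime_pow_succ_mul_add 1 n ha

theorem rowCount_prime (n : ℕ) :
    rowCount p n = ∏ c ∈ range p, (c + 1) ^ subwordCount p n [c] := by
  have one_lt : 1 < p := (Fact.out : p.Prime).one_lt
  induction n using digit_induction one_lt with
  | zero => simp [rowCount_zero one_lt.ne', subwordCount_zero]
  | mul_add n a ha ih =>
    have digit_factor : ∀ c ∈ range p, (c + 1) ^ subwordCount p (p * n + a) [c] =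
        (c + 1) ^ subwordCount p n [c] * if a = c then c + 1 else 1 := by
      intro c _
      rcases eq_or_ne c 0 with rfl | hc
      · simp
      · rw [subwordCount_singleton_mul_add one_lt ha hc]
        split_ifs <;> simp [pow_succ]
    rw [rowCount_prime_mul_add n ha, ih, prod_congr rfl digit_factor, prod_mul_distrib,
      prod_ite_eq, if_pos (mem_range.2 ha), mul_comm]

end RowCount

section PrimeSquare

theorem cword_pair (b c d : ℕ) :
    cword b [c, d] = (c / (c + 1)) * ((b - d - 1) / (d + 1)) := by
  simp [cword]

theorem sum_cword_pair_mul_add {b a : ℕ} (hb : 1 < b) (n : ℕ) (ha : a < b) :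
    ∑ c ∈ range b, ∑ d ∈ range b, cword b [c, d] * subwordCount b (b * n + a) [c, d] =
      ∑ c ∈ range b, ∑ d ∈ range b, cword b [c, d] * subwordCount b n [c, d] +
        cword b [n % b, a] := by
  have pair_term (c d : ℕ) : cword b [c, d] * subwordCount b (b * n + a) [c, d] =
      cword b [c, d] * subwordCount b n [c, d] +
        if n % b = c ∧ a = d then cword b [c, d] else 0 := by
    rcases eq_or_ne c 0 with rfl | hc
    · simp [cword_pair]
    · rw [subwordCount_pair_mul_add hb ha hc]
      split_ifs <;> simp [mul_add]
  simp only [pair_term, sum_add_distrib, ite_and, sum_ite_eq, sum_ite_irrel, sum_const_zero]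
  simp [ha, Nat.mod_lt n (by lia : 0 < b)]

theorem rowCount_prime_sq_eq_rowCount_prime_mul {p : ℕ} [Fact p.Prime] (n : ℕ) :
    (rowCount (p ^ 2) n : ℚ) = rowCount p n *
      (1 + ∑ c ∈ range p, ∑ d ∈ range p, cword p [c, d] * subwordCount p n [c, d]) := by
  have one_lt : 1 < p := (Fact.out : p.Prime).one_lt
  induction n using digit_induction one_lt with
  | zero => simp [rowCount_zero, subwordCount_zero, one_lt.ne']
  | mul_add n a ha ih =>
    have row_n : (rowCount p n : ℚ) = ((n % p : ℕ) + 1) * rowCount p (n / p) := by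
      exact_mod_cast Nat.div_add_mod n p ▸ rowCount_prime_mul_add (n / p) (n.mod_lt (by lia))
    rw [rowCount_prime_sq_mul_add n ha, rowCount_prime_mul_add n ha,
      sum_cword_pair_mul_add one_lt n ha, cword_pair]
    push_cast [Nat.cast_sub (Nat.succ_le_of_lt ha)]
    rw [ih, row_n]
    field_simp
    ring

theorem stmt13_general (p : ℕ) [Fact p.Prime] (n : ℕ) :
    (rowCount (p ^ 2) n : ℚ) = (∏ c ∈ range p, (c + 1 : ℚ) ^ subwordCount p n [c]) *
      (1 + ∑ c ∈ range p, ∑ d ∈ range p, cword p [c, d] * subwordCount p n [c, d]) := by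
  simp [rowCount_prime_sq_eq_rowCount_prime_mul, rowCount_prime]

end PrimeSquare

/-- For every `n ≥ 0`, as an identity in the rational numbers:
`a_4(n) = 2^{|n|_1} · (1 + (1/2)|n|_{10})`, subword counts taken in base 2. -/
theorem stmt13 (n : ℕ) :
    (rowCount 4 n : ℚ) =
      2 ^ subwordCount 2 n [1] * (1 + (1 / 2) * (subwordCount 2 n [1, 0] : ℚ)) := by
  simpa [sum_range_succ, prod_range_succ, cword_pair, one_add_one_eq_two,
    show (2 - 1 : ℚ) = 1 by norm_num] using stmt13_general 2 n
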